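/- arXiv:1512.02505 — 8 statements merged into one kernel-verified Lean document; each statement's English description precedes it below -/
import Mathlib

section
/- There exists a finite simple graph G that does not admit a 2-star-coloring. Concretely, let G be the graph with vertex set {u, u_1, …, u_8, u_{21}, u_{22}, u_{23}, u_{24}, u_{31}, u_{32}, u_{33}, u_{34}} and edge set consisting of: u–u_i for all i = 1, …, 8; u_i–u_{i+1} for all i = 1, …, 7; u_2–u_{2j} for all j = 1, …, 4; u_{21}–u_{22}, u_{22}–u_{23}, u_{23}–u_{24}; u_3–u_{3j} for all j = 1, …, 4; and u_{31}–u_{32}, u_{32}–u_{33}, u_{33}–u_{34}. Then G admits no 2-star-coloring. -/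
/-- A `κ`-star-coloring of a simple graph `G` (with colors drawn from a type `α`
of `κ` colors) is a vertex coloring such that every monochromatic component is a
star (a tree of diameter at most 2); equivalently, there is no monochromatic
triangle and no monochromatic path on four distinct vertices. -/
def IsStarColoring {V α : Type*} (G : SimpleGraph V) (c : V → α) : Prop :=
  (∀ x y z : V, G.Adj x y → G.Adj y z → G.Adj x z → ¬(c x = c y ∧ c y = c z)) ∧
  (∀ a b d e : V, a ≠ b → a ≠ d → a ≠ e → b ≠ d → b ≠ e → d ≠ e →
    G.Adj a b → G.Adj b d → G.Adj d e → ¬(c a = c b ∧ c b = c d ∧ c d = c e))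

/-- The outerplanar counterexample graph of Lemma 1: vertex `0` is `u`,
vertices `1,…,8` are `u_1,…,u_8`, vertices `9,…,12` are `u_{21},…,u_{24}`,
and vertices `13,…,16` are `u_{31},…,u_{34}`. -/
def counterexampleGraph : SimpleGraph (Fin 17) :=
  SimpleGraph.fromEdgeSet
    {s(0,1), s(0,2), s(0,3), s(0,4), s(0,5), s(0,6), s(0,7), s(0,8),
     s(1,2), s(2,3), s(3,4), s(4,5), s(5,6), s(6,7), s(7,8),
     s(2,9), s(2,10), s(2,11), s(2,12),
     s(9,10), s(10,11), s(11,12),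
     s(3,13), s(3,14), s(3,15), s(3,16),
     s(13,14), s(14,15), s(15,16)}

/-!
In a coloring with at most two colors and no monochromatic path on four vertices, every path on four
vertices meets every color. So if `v` is joined to all vertices of such a path, then `v` has a
neighbor of its own color on it. Two adjacent vertices of the same color with disjoint fans of this
kind would therefore be the middle of a monochromatic path: one vertex from each fan extends the
edge. In the counterexample `u`, `u_2`, `u_3` form a triangle whose vertices carry pairwise disjoint
fans, so they would need three different colors.
-/

open Function Set

section Fans

variable {V α ι : Type*} {G : SimpleGraph V} {c : V → α}

/-- The vertices `p 0, p 1, p 2, p 3` form a path of `G`, not necessarily induced. -/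
def IsFourPath (G : SimpleGraph V) (p : Fin 4 → V) : Prop :=
  Injective p ∧ ∀ i : Fin 3, G.Adj (p i.castSucc) (p i.succ)

/-- A fan: a hub, stored as `f 0`, joined to every vertex of the path on four vertices
`f 1, f 2, f 3, f 4`. -/
def IsFan (G : SimpleGraph V) (f : Fin 5 → V) : Prop :=
  IsFourPath G (Fin.tail f) ∧ ∀ i : Fin 4, G.Adj (f 0) (f i.succ)

/-- No path on four vertices is monochromatic. This weakening of `IsStarColoring` also allows
triangles as monochromatic components. -/
def AvoidsMonochromaticFourPath (G : SimpleGraph V) (c : V → α) : Prop :=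
  ∀ p : Fin 4 → V, IsFourPath G p → ¬ ∃ k, ∀ i, c (p i) = k

theorem isFourPath_vecCons {x v w y : V} (hxv : G.Adj x v) (hvw : G.Adj v w) (hwy : G.Adj w y)
    (hxw : x ≠ w) (hxy : x ≠ y) (hvy : v ≠ y) : IsFourPath G ![x, v, w, y] := by
  constructor
  · simp [Injective, Fin.forall_fin_succ, hxv.ne, hvw.ne, hwy.ne, hxw, hxy, hvy,
      hxv.ne', hvw.ne', hwy.ne', hxw.symm, hxy.symm, hvy.symm]
  · simp [Fin.forall_fin_succ, hxv, hvw, hwy]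

theorem IsStarColoring.avoidsMonochromaticFourPath (hc : IsStarColoring G c) :
    AvoidsMonochromaticFourPath G c := by
  rintro p ⟨hp, hadj⟩ ⟨k, hk⟩
  exact hc.2 (p 0) (p 1) (p 2) (p 3) (hp.ne (by decide)) (hp.ne (by decide)) (hp.ne (by decide))
    (hp.ne (by decide)) (hp.ne (by decide)) (hp.ne (by decide)) (hadj 0) (hadj 1) (hadj 2)
    ⟨(hk 0).trans (hk 1).symm, (hk 1).trans (hk 2).symm, (hk 2).trans (hk 3).symm⟩

namespace AvoidsMonochromaticFourPath

variable [Fintype α]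

theorem exists_color_eq (hc : AvoidsMonochromaticFourPath G c) (hα : Fintype.card α ≤ 2)
    {p : Fin 4 → V} (hp : IsFourPath G p) (k : α) : ∃ i, c (p i) = k := by
  by_contra! hk
  refine hc p hp ⟨c (p 0), fun i ↦ ?_⟩
  by_contra hi
  exact hα.not_gt (Fintype.two_lt_card_iff.2 ⟨_, _, _, hi, hk i, hk 0⟩)

theorem hub_color_ne (hc : AvoidsMonochromaticFourPath G c) (hα : Fintype.card α ≤ 2)
    {f g : Fin 5 → V} (hf : IsFan G f) (hg : IsFan G g) (hadj : G.Adj (f 0) (g 0))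
    (hdisj : Disjoint (range f) (range g)) : c (f 0) ≠ c (g 0) := by
  intro hfg
  have hne : ∀ i j, f i ≠ g j := Set.disjoint_range_iff.1 hdisj
  obtain ⟨i, hi⟩ : ∃ i : Fin 4, c (f i.succ) = c (f 0) := hc.exists_color_eq hα hf.1 _
  obtain ⟨j, hj⟩ : ∃ j : Fin 4, c (g j.succ) = c (f 0) := hc.exists_color_eq hα hg.1 _
  have hpath : IsFourPath G ![f i.succ, f 0, g 0, g j.succ] :=
    isFourPath_vecCons (hf.2 i).symm hadj (hg.2 j) (hne _ _) (hne _ _) (hne _ _)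
  refine hc _ hpath ⟨c (f 0), ?_⟩
  simp [Fin.forall_fin_succ, hi, hj, hfg.symm]

theorem injective_hub_color (hc : AvoidsMonochromaticFourPath G c) (hα : Fintype.card α ≤ 2)
    {f : ι → Fin 5 → V} (hfan : ∀ s, IsFan G (f s))
    (hadj : Pairwise fun s t ↦ G.Adj (f s 0) (f t 0))
    (hdisj : Pairwise fun s t ↦ Disjoint (range (f s)) (range (f t))) :
    Injective fun s ↦ c (f s 0) :=
  injective_iff_pairwise_ne.2 fun s t hst ↦
    hc.hub_color_ne hα (hfan s) (hfan t) (hadj hst) (hdisj hst)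

end AvoidsMonochromaticFourPath

end Fans

/-- The fans of `counterexampleGraph` with hubs `u`, `u_2` and `u_3` on the paths
`u_5 u_6 u_7 u_8`, `u_{21} u_{22} u_{23} u_{24}` and `u_{31} u_{32} u_{33} u_{34}`. -/
def counterexampleFan : Fin 3 → Fin 5 → Fin 17 :=
  ![![0, 5, 6, 7, 8], ![2, 9, 10, 11, 12], ![3, 13, 14, 15, 16]]

theorem isFan_counterexampleFan (s : Fin 3) : IsFan counterexampleGraph (counterexampleFan s) := by
  fin_cases s <;>
    simp [IsFan, IsFourPath, Injective, Fin.forall_fin_succ, Fin.tail, counterexampleFan,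
      counterexampleGraph]

theorem pairwise_adj_counterexampleFan_hub :
    Pairwise fun s t ↦ counterexampleGraph.Adj (counterexampleFan s 0) (counterexampleFan t 0) := by
  simp [Pairwise, Fin.forall_fin_succ, counterexampleFan, counterexampleGraph]

theorem pairwise_disjoint_counterexampleFan :
    Pairwise fun s t ↦ Disjoint (range (counterexampleFan s)) (range (counterexampleFan t)) := by
  simp only [Pairwise, Set.disjoint_range_iff]
  decide

theorem counterexampleGraph_not_two_star_colorable_general :
    ¬ ∃ c : Fin 17 → Fin 2, AvoidsMonochromaticFourPath counterexampleGraph c := by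
  rintro ⟨c, hc⟩
  have hinj : Injective fun s ↦ c (counterexampleFan s 0) :=
    hc.injective_hub_color (Fintype.card_fin 2).le isFan_counterexampleFan
      pairwise_adj_counterexampleFan_hub pairwise_disjoint_counterexampleFan
  have hcard : Fintype.card (Fin 3) ≤ Fintype.card (Fin 2) := Fintype.card_le_of_injective _ hinj
  simp at hcard

/-- The graph `counterexampleGraph` admits no 2-star-coloring. -/
theorem counterexampleGraph_not_two_star_colorable :
    ¬ ∃ c : Fin 17 → Fin 2, IsStarColoring counterexampleGraph c := by
  rintro ⟨c, hc⟩
  exact counterexampleGraph_not_two_star_colorable_general ⟨c, hc.avoidsMonochromaticFourPath⟩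
end

section
/- Let F be the fan graph with vertex set {u, u_1, …, u_8} and edges u–u_i for all i = 1, …, 8 and u_i–u_{i+1} for all i = 1, …, 7. In every 2-star-coloring c of F, at least two of the vertices u_1, …, u_8 receive the same color as u (and hence u is the center of a monochromatic star). -/
/-- The fan graph `F`: vertex `0` is `u` and vertices `1,…,8` are `u_1,…,u_8`,
with edges `u–u_i` for `i = 1,…,8` and `u_i–u_{i+1}` for `i = 1,…,7`. -/
def fanGraph : SimpleGraph (Fin 9) :=
  SimpleGraph.fromEdgeSet
    {s(0,1), s(0,2), s(0,3), s(0,4), s(0,5), s(0,6), s(0,7), s(0,8),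
     s(1,2), s(2,3), s(3,4), s(4,5), s(5,6), s(6,7), s(7,8)}

/-!
With two colors, a path that is not monochromatic contains both of them. Cutting a path on `n`
vertices into consecutive blocks of `m` vertices, each color therefore occurs at least `n / m` times
as soon as no path on `m` vertices is monochromatic. For the fan graph, take the color of `u`, the
path `u_1, …, u_8` and `m = 4`.
-/

open SimpleGraph
open scoped Finset

/-- `AvoidsMonochromatic c H G`: no copy of `H` in `G`, induced or not, is monochromatic under the
vertex coloring `c` of `G`. For `H = pathGraph 4` this is the path condition of
`IsStarColoring`. -/
def AvoidsMonochromatic {V W α : Type*} (c : V → α) (H : SimpleGraph W) (G : SimpleGraph V) :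
    Prop :=
  ∀ f : H.Copy G, ∃ v w, c (f v) ≠ c (f w)

theorem IsStarColoring.avoidsMonochromatic_pathGraph_four {V α : Type*} {G : SimpleGraph V}
    {c : V → α} (hc : IsStarColoring G c) : AvoidsMonochromatic c (pathGraph 4) G := by
  intro f
  by_contra! hmono
  have hadj : ∀ {v w : Fin 4}, (pathGraph 4).Adj v w → G.Adj (f v) (f w) := f.toHom.map_adj
  have hne : ∀ {v w : Fin 4}, v ≠ w → f v ≠ f w := f.injective.ne
  exact hc.2 (f 0) (f 1) (f 2) (f 3)
    (hne (by decide)) (hne (by decide)) (hne (by decide))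
    (hne (by decide)) (hne (by decide)) (hne (by decide))
    (hadj (by simp [pathGraph_adj])) (hadj (by simp [pathGraph_adj]))
    (hadj (by simp [pathGraph_adj]))
    ⟨hmono 0 1, hmono 1 2, hmono 2 3⟩

theorem AvoidsMonochromatic.exists_color_eq {V W α : Type*} [Fintype α]
    (hα : Fintype.card α ≤ 2) {H : SimpleGraph W} {G : SimpleGraph V} {c : V → α}
    (hc : AvoidsMonochromatic c H G) (f : H.Copy G) (x : α) : ∃ v, c (f v) = x := by
  by_contra! hx
  obtain ⟨v, w, hvw⟩ := hc f
  exact hα.not_gt (Fintype.two_lt_card_iff.mpr ⟨c (f v), c (f w), x, hvw, hx v, hx w⟩)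

/-- The subpath on the `m` vertices `a, …, a + m - 1` of the path on `0, …, n - 1`,
for cutting a path into blocks. -/
def pathGraphSegment {a m n : ℕ} (h : a + m ≤ n) : (pathGraph m).Copy (pathGraph n) where
  toHom :=
    { toFun v := (v.natAdd a).castLE h
      map_rel' := by simp [pathGraph_adj, add_assoc] }
  injective' := (Fin.castLE_injective h).comp (Fin.natAdd_injective m a)

@[simp]
theorem val_pathGraphSegment {a m n : ℕ} (h : a + m ≤ n) (v : Fin m) :
    (pathGraphSegment h v : ℕ) = a + v :=
  rfl

theorem fanGraph_two_neighbors_of_u_same_color_general {V α : Type*} [Fintype α] [DecidableEq α]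
    (hα : Fintype.card α ≤ 2) {G : SimpleGraph V} {c : V → α} {m n : ℕ}
    (hc : AvoidsMonochromatic c (pathGraph m) G) (f : (pathGraph n).Copy G) (x : α) :
    n / m ≤ #{v | c (f v) = x} := by
  have hblock (k : Fin (n / m)) : m * k + m ≤ n :=
    (Nat.mul_le_mul_left m k.isLt).trans (Nat.mul_div_le n m)
  choose v hv using fun k ↦ hc.exists_color_eq hα (f.comp (pathGraphSegment (hblock k))) x
  let w (k : Fin (n / m)) : Fin n := pathGraphSegment (hblock k) (v k)
  have hw_div (k : Fin (n / m)) : (w k : ℕ) / m = k := by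
    simp [w, Nat.mul_add_div (v k).pos, Nat.div_eq_of_lt (v k).isLt]
  have hw : Function.Injective w := fun k l hkl ↦
    Fin.ext (by rw [← hw_div k, ← hw_div l, hkl])
  simpa using Finset.card_le_card_of_injOn (s := Finset.univ) (t := {v | c (f v) = x}) w
    (fun k _ ↦ by simpa using hv k) hw.injOn

/-- The path `u_1, …, u_8` of the fan graph, as a copy of `pathGraph 8` whose vertex
`i : Fin 8` is sent to `u_{i+1}`. -/
def fanGraphRim : (pathGraph 8).Copy fanGraph where
  toHom :=
    { toFun := Fin.succ
      map_rel' := by simp only [pathGraph_adj, fanGraph]; decide }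
  injective' := Fin.succ_injective 8

/-- In every 2-star-coloring of the fan graph, at least two of the
vertices `u_1,…,u_8` receive the same color as `u`. -/
theorem fanGraph_two_neighbors_of_u_same_color (c : Fin 9 → Fin 2)
    (h : IsStarColoring fanGraph c) :
    ∃ i j : Fin 9, i ≠ j ∧ i ≠ 0 ∧ j ≠ 0 ∧ c i = c 0 ∧ c j = c 0 := by
  obtain ⟨i, hi, j, hj, hij⟩ := Finset.one_lt_card.mp <|
    fanGraph_two_neighbors_of_u_same_color_general (Fintype.card_fin 2).le
      h.avoidsMonochromatic_pathGraph_four fanGraphRim (c 0)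
  exact ⟨i.succ, j.succ, (Fin.succ_injective 8).ne hij, i.succ_ne_zero, j.succ_ne_zero,
    (Finset.mem_filter.mp hi).2, (Finset.mem_filter.mp hj).2⟩
end

section
/- Every triangle strip admits a 2-star-coloring. Here a triangle strip on n ≥ 3 vertices is a graph whose vertices can be ordered w_1, …, w_n so that, setting T_1 = {w_1, w_2, w_3}, for each j = 2, …, n−2 the triangle T_j is obtained from T_{j−1} by removing one of its three vertices and adding the new vertex w_{j+2}, and the edge set of the graph is exactly the union over all j of the three edges spanned by the vertices of T_j. (Triangle strips are exactly the inner-triangulated outerpaths, i.e., maximal outerplanar graphs whose weak dual is a path.) Moreover such a coloring can be computed in linear time. -/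
/-!
A star forest remains one when a new leaf is hung on a star center. So we color the strip vertex by
vertex, keeping track of which vertices of the current triangle can be made star centers of the
monochromatic subgraph. Any two vertices `y`, `z` of the current triangle turn out to be in one of
the following states, up to swapping them.

* `y` is a *fan center*: it is a star center in some coloring in which `z` has the same color, and
  also in some coloring in which `z` has a different color and no neighbor of its own color.
* `y` and `z` are *free*: for either of them, some coloring with `y` and `z` of equal color and some
  coloring with `y` and `z` of distinct colors make it a star center.

Attaching a new vertex `w` to `y` and `z` preserves the state of `{y, z}`. If `y` is a fan center
against `z`, it becomes one against `w`, and `{z, w}` becomes free. If `{y, z}` is free, `y` and `z`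
become fan centers against `w`. So one of the states persists for each pair of the new triangle,
whichever of its vertices is removed next.
-/

open SimpleGraph Function

section StarForest

variable {V : Type*}

/-- `v` is the center of a star component of `G`, that is, all its neighbors are leaves. Isolated
vertices and both ends of a component with a single edge qualify. -/
def IsStarCenter (G : SimpleGraph V) (v : V) : Prop :=
  ∀ ⦃u⦄, G.Adj v u → ∀ ⦃t⦄, G.Adj u t → t = v

/-- Every component of `G` is a star, expressed locally: each edge has a star center as an end. -/
def IsStarForest (G : SimpleGraph V) : Prop :=
  ∀ ⦃u v⦄, G.Adj u v → IsStarCenter G u ∨ IsStarCenter G v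

variable {H : SimpleGraph V} {v w : V}

theorem isStarForest_bot : IsStarForest (⊥ : SimpleGraph V) :=
  fun _ _ h => h.elim

theorem isStarCenter_of_isIsolated (hv : H.IsIsolated v) : IsStarCenter H v :=
  fun u hu => (hv u hu).elim

theorem IsStarCenter.sup_edge (hv : IsStarCenter H v) (hw : H.IsIsolated w) :
    IsStarCenter (H ⊔ edge v w) v := by
  rintro u (hu | hu) t (ht | ht)
  · exact hv hu ht
  · have := hw u
    grind [SimpleGraph.irrefl, SimpleGraph.adj_comm]
  · have := hw t
    grind
  · grind

theorem IsStarCenter.sup_edge_of_not_adj {u : V} (hu : IsStarCenter H u) (huv : u ≠ v)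
    (huw : u ≠ w) (hv : ¬ H.Adj u v) (hw : H.IsIsolated w) :
    IsStarCenter (H ⊔ edge v w) u := by
  rintro a (ha | ha) t (ht | ht)
  · exact hu ha ht
  · have := hw u
    grind [SimpleGraph.adj_comm]
  all_goals grind

theorem IsStarForest.sup_edge (hH : IsStarForest H) (hv : IsStarCenter H v)
    (hw : H.IsIsolated w) : IsStarForest (H ⊔ edge v w) := by
  have hvw : IsStarCenter (H ⊔ edge v w) v := hv.sup_edge hw
  rintro a b (hab | hab)
  · by_cases hva : v = a
    · exact .inl (hva ▸ hvw)
    by_cases hvb : v = b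
    · exact .inr (hvb ▸ hvw)
    have hav : ¬ H.Adj a v := fun h => hvb (hv h.symm hab).symm
    have hbv : ¬ H.Adj b v := fun h => hva (hv h.symm hab.symm).symm
    have haw : a ≠ w := fun h => hw b (h ▸ hab)
    have hbw : b ≠ w := fun h => hw a (h ▸ hab.symm)
    exact (hH hab).imp (·.sup_edge_of_not_adj (Ne.symm hva) haw hav hw)
      (·.sup_edge_of_not_adj (Ne.symm hvb) hbw hbv hw)
  · grind

end StarForest

section Monochromatic

variable {V α : Type*}

/-- The subgraph of the edges of `G` whose ends have the same color under `c`. -/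
@[simps]
def monochromaticSubgraph (G : SimpleGraph V) (c : V → α) : SimpleGraph V where
  Adj a b := G.Adj a b ∧ c a = c b
  symm := ⟨fun _ _ h => ⟨h.1.symm, h.2.symm⟩⟩
  loopless := ⟨fun _ h => h.1.ne rfl⟩

theorem isStarColoring_of_isStarForest {G : SimpleGraph V} {c : V → α}
    (h : IsStarForest (monochromaticSubgraph G c)) : IsStarColoring G c := by
  constructor
  · rintro x y z hxy hyz hxz ⟨cxy, cyz⟩
    rcases h ⟨hxy, cxy⟩ with hx | hy
    · exact hxz.ne' (hx ⟨hxy, cxy⟩ ⟨hyz, cyz⟩)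
    · exact hyz.ne' (hy ⟨hxy.symm, cxy.symm⟩ ⟨hxz, cxy.trans cyz⟩)
  · rintro a b d e - had - - hbe - hab hbd hde ⟨cab, cbd, cde⟩
    rcases h ⟨hbd, cbd⟩ with hb | hd
    · exact hbe (hb ⟨hbd, cbd⟩ ⟨hde, cde⟩).symm
    · exact had (hd ⟨hbd.symm, cbd.symm⟩ ⟨hab.symm, cab.symm⟩)

theorem monochromaticSubgraph_const (G : SimpleGraph V) (k : α) :
    monochromaticSubgraph G (fun _ => k) = G := by
  ext a b
  simp [monochromaticSubgraph]

theorem monochromaticSubgraph_edge_of_ne {c : V → α} {y z : V} (hc : c y ≠ c z) :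
    monochromaticSubgraph (edge y z) c = ⊥ := by
  ext a b
  grind [monochromaticSubgraph_adj, bot_adj]

/-- The graph obtained from `G` by joining `w` to `y` and `z`. -/
def attachVertex (G : SimpleGraph V) (y z w : V) : SimpleGraph V :=
  G ⊔ edge y w ⊔ edge z w

theorem attachVertex_comm (G : SimpleGraph V) (y z w : V) :
    attachVertex G y z w = attachVertex G z y w :=
  sup_right_comm ..

variable {G : SimpleGraph V} {y z w : V} {c : V → α}

variable [DecidableEq V]

theorem monochromaticSubgraph_attachVertex_of_ne (hw : G.IsIsolated w) {k : α} (hky : k ≠ c y)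
    (hkz : k ≠ c z) :
    monochromaticSubgraph (attachVertex G y z w) (update c w k) = monochromaticSubgraph G c := by
  have hw' (a : V) : ¬ G.Adj a w := fun h => hw a h.symm
  ext a b
  grind [monochromaticSubgraph_adj, attachVertex, IsIsolated, update_apply]

theorem monochromaticSubgraph_attachVertex_of_eq (hw : G.IsIsolated w) (hwy : w ≠ y)
    (hc : c y ≠ c z) :
    monochromaticSubgraph (attachVertex G y z w) (update c w (c y)) =
      monochromaticSubgraph G c ⊔ edge y w := by
  have hw' (a : V) : ¬ G.Adj a w := fun h => hw a h.symm
  ext a b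
  grind [monochromaticSubgraph_adj, attachVertex, IsIsolated, update_apply]

end Monochromatic

section PairState

variable {V α : Type*}

variable (α) in
/-- Some star coloring with colors in `α` makes `y` a star center with the same color as `z`. -/
def CanCenterEq (G : SimpleGraph V) (y z : V) : Prop :=
  ∃ c : V → α, IsStarForest (monochromaticSubgraph G c) ∧
    IsStarCenter (monochromaticSubgraph G c) y ∧ c y = c z

variable (α) in
/-- Some star coloring with colors in `α` makes `y` a star center with a color other than that of
`z`. -/
def CanCenterNe (G : SimpleGraph V) (y z : V) : Prop :=
  ∃ c : V → α, IsStarForest (monochromaticSubgraph G c) ∧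
    IsStarCenter (monochromaticSubgraph G c) y ∧ c y ≠ c z

variable (α) in
/-- Some star coloring with colors in `α` makes `y` a star center with a color other than that of
`z`, while `z` has no neighbor of its own color. -/
def CanCenterIsolating (G : SimpleGraph V) (y z : V) : Prop :=
  ∃ c : V → α, IsStarForest (monochromaticSubgraph G c) ∧
    IsStarCenter (monochromaticSubgraph G c) y ∧ c y ≠ c z ∧
    (monochromaticSubgraph G c).IsIsolated z

variable (α) in
/-- The state of a pair in which `y` is a fan center against `z`. -/
def IsFanPair (G : SimpleGraph V) (y z : V) : Prop :=
  CanCenterIsolating α G y z ∧ CanCenterEq α G y z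

variable (α) in
/-- The state of a free pair, in which the roles of `y` and `z` are interchangeable. -/
def IsFreePair (G : SimpleGraph V) (y z : V) : Prop :=
  (CanCenterNe α G y z ∧ CanCenterEq α G y z) ∧ CanCenterNe α G z y ∧ CanCenterEq α G z y

variable (α) in
/-- The invariant for the pairs of vertices of the current triangle: one of the states above holds,
up to swapping the two vertices. -/
def IsExtendablePair (G : SimpleGraph V) (y z : V) : Prop :=
  IsFanPair α G y z ∨ IsFanPair α G z y ∨ IsFreePair α G y z

variable {G : SimpleGraph V} {y z w : V}

theorem IsFreePair.symm (h : IsFreePair α G y z) : IsFreePair α G z y :=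
  And.symm h

theorem IsExtendablePair.symm (h : IsExtendablePair α G y z) : IsExtendablePair α G z y := by
  rcases h with h | h | h
  exacts [.inr (.inl h), .inl h, .inr (.inr h.symm)]

instance : Std.Symm (IsExtendablePair α G) := ⟨fun _ _ => .symm⟩

theorem IsExtendablePair.exists_isStarForest (h : IsExtendablePair α G y z) :
    ∃ c : V → α, IsStarForest (monochromaticSubgraph G c) := by
  rcases h with ⟨-, c, hc, -⟩ | ⟨-, c, hc, -⟩ | ⟨⟨-, c, hc, -⟩, -⟩ <;> exact ⟨c, hc⟩

theorem isFreePair_edge [Nontrivial α] (hyz : y ≠ z) : IsFreePair α (edge y z) y z := by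
  classical
  obtain ⟨k, l, hkl⟩ := exists_pair_ne α
  have centerNe {a b : V} (hab : a ≠ b) : CanCenterNe α (edge a b) a b := by
    have hc : update (fun _ => k) b l a ≠ update (fun _ => k) b l b := by simpa [hab] using hkl
    refine ⟨update (fun _ => k) b l, ?_, ?_, hc⟩ <;>
      rw [monochromaticSubgraph_edge_of_ne hc]
    exacts [isStarForest_bot, isStarCenter_of_isIsolated .bot]
  have centerEq (a b : V) : CanCenterEq α (edge a b) a b := by
    have ha : IsStarCenter (⊥ : SimpleGraph V) a := isStarCenter_of_isIsolated .bot
    refine ⟨fun _ => k, ?_, ?_, rfl⟩ <;>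
      rw [monochromaticSubgraph_const, ← bot_sup_eq (edge a b)]
    exacts [isStarForest_bot.sup_edge ha .bot, ha.sup_edge .bot]
  exact ⟨⟨centerNe hyz, centerEq y z⟩, edge_comm y z ▸ ⟨centerNe hyz.symm, centerEq z y⟩⟩

section Attach

variable (hw : G.IsIsolated w) (hwy : w ≠ y) (hwz : w ≠ z)
include hw hwy hwz

theorem CanCenterEq.exists_attachVertex [Nontrivial α] (h : CanCenterEq α G y z) :
    ∃ c : V → α, IsStarForest (monochromaticSubgraph (attachVertex G y z w) c) ∧
      IsStarCenter (monochromaticSubgraph (attachVertex G y z w) c) y ∧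
      (monochromaticSubgraph (attachVertex G y z w) c).IsIsolated w ∧ c y = c z ∧ c y ≠ c w := by
  classical
  obtain ⟨c, hc, hy, hyz⟩ := h
  obtain ⟨k, hk⟩ := exists_ne (c y)
  refine ⟨update c w k, ?_⟩
  rw [monochromaticSubgraph_attachVertex_of_ne hw hk (hyz ▸ hk)]
  exact ⟨hc, hy, fun a ha => hw a ha.1, by simpa [hwy.symm, hwz.symm] using ⟨hyz, hk.symm⟩⟩

theorem CanCenterNe.exists_attachVertex (h : CanCenterNe α G y z) :
    ∃ c : V → α, IsStarForest (monochromaticSubgraph (attachVertex G y z w) c) ∧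
      IsStarCenter (monochromaticSubgraph (attachVertex G y z w) c) y ∧ c y ≠ c z ∧ c y = c w := by
  classical
  obtain ⟨c, hc, hy, hyz⟩ := h
  have hw' : (monochromaticSubgraph G c).IsIsolated w := fun a ha => hw a ha.1
  refine ⟨update c w (c y), ?_⟩
  rw [monochromaticSubgraph_attachVertex_of_eq hw hwy hyz]
  exact ⟨hc.sup_edge hy hw', hy.sup_edge hw', by simpa [hwy.symm, hwz.symm] using hyz⟩

theorem CanCenterIsolating.exists_attachVertex_eq_center (h : CanCenterIsolating α G y z) :
    ∃ c : V → α, IsStarForest (monochromaticSubgraph (attachVertex G y z w) c) ∧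
      IsStarCenter (monochromaticSubgraph (attachVertex G y z w) c) y ∧
      (monochromaticSubgraph (attachVertex G y z w) c).IsIsolated z ∧ c y ≠ c z ∧ c y = c w := by
  classical
  obtain ⟨c, hc, hy, hyz, hz⟩ := h
  have hw' : (monochromaticSubgraph G c).IsIsolated w := fun a ha => hw a ha.1
  refine ⟨update c w (c y), ?_⟩
  rw [monochromaticSubgraph_attachVertex_of_eq hw hwy hyz]
  refine ⟨hc.sup_edge hy hw', hy.sup_edge hw', ?_, by simpa [hwy.symm, hwz.symm] using hyz⟩
  have := ne_of_apply_ne c hyz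
  grind [IsIsolated]

omit hwy in
theorem CanCenterIsolating.exists_attachVertex_eq_isolated (h : CanCenterIsolating α G y z) :
    ∃ c : V → α, IsStarForest (monochromaticSubgraph (attachVertex G y z w) c) ∧
      IsStarCenter (monochromaticSubgraph (attachVertex G y z w) c) z ∧
      IsStarCenter (monochromaticSubgraph (attachVertex G y z w) c) w ∧ c z = c w := by
  classical
  obtain ⟨c, hc, -, hyz, hz⟩ := h
  have hw' : (monochromaticSubgraph G c).IsIsolated w := fun a ha => hw a ha.1
  have hz' := isStarCenter_of_isIsolated hz
  refine ⟨update c w (c z), ?_⟩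
  rw [attachVertex_comm, monochromaticSubgraph_attachVertex_of_eq hw hwz hyz.symm]
  refine ⟨hc.sup_edge hz' hw', hz'.sup_edge hw', ?_, by simp [hwz.symm]⟩
  rw [edge_comm]
  exact (isStarCenter_of_isIsolated hw').sup_edge hz

theorem IsFanPair.pairs_attachVertex [Nontrivial α] (h : IsFanPair α G y z) :
    IsFanPair α (attachVertex G y z w) y z ∧ IsFanPair α (attachVertex G y z w) y w ∧
      IsFreePair α (attachVertex G y z w) z w := by
  obtain ⟨hiso, heq⟩ := h
  obtain ⟨c, hc, hy, hw', cyz, cyw⟩ := heq.exists_attachVertex hw hwy hwz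
  obtain ⟨d, hd, hy', hz', dyz, dyw⟩ := hiso.exists_attachVertex_eq_center hw hwy hwz
  obtain ⟨e, he, hz'', hw'', ezw⟩ := hiso.exists_attachVertex_eq_isolated hw hwz
  refine ⟨⟨⟨d, hd, hy', dyz, hz'⟩, c, hc, hy, cyz⟩,
    ⟨⟨c, hc, hy, cyw, hw'⟩, d, hd, hy', dyw⟩, ⟨?_, e, he, hz'', ezw⟩, ?_, e, he, hw'', ezw.symm⟩
  · exact ⟨d, hd, isStarCenter_of_isIsolated hz', dyw ▸ dyz.symm⟩
  · exact ⟨c, hc, isStarCenter_of_isIsolated hw', cyz ▸ cyw.symm⟩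

theorem IsFreePair.left_attachVertex [Nontrivial α] (h : IsFreePair α G y z) :
    (CanCenterNe α (attachVertex G y z w) y z ∧ CanCenterEq α (attachVertex G y z w) y z) ∧
      IsFanPair α (attachVertex G y z w) y w := by
  obtain ⟨⟨hne, heq⟩, -⟩ := h
  obtain ⟨c, hc, hy, hw', cyz, cyw⟩ := heq.exists_attachVertex hw hwy hwz
  obtain ⟨d, hd, hy', dyz, dyw⟩ := hne.exists_attachVertex hw hwy hwz
  exact ⟨⟨⟨d, hd, hy', dyz⟩, c, hc, hy, cyz⟩, ⟨c, hc, hy, cyw, hw'⟩, d, hd, hy', dyw⟩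

theorem IsFreePair.pairs_attachVertex [Nontrivial α] (h : IsFreePair α G y z) :
    IsFreePair α (attachVertex G y z w) y z ∧ IsFanPair α (attachVertex G y z w) y w ∧
      IsFanPair α (attachVertex G y z w) z w := by
  obtain ⟨hyz, hyw⟩ := h.left_attachVertex hw hwy hwz
  obtain ⟨hzy, hzw⟩ := attachVertex_comm G z y w ▸ h.symm.left_attachVertex hw hwz hwy
  exact ⟨⟨hyz, hzy⟩, hyw, hzw⟩

theorem IsExtendablePair.pairwise_attachVertex [Nontrivial α] (h : IsExtendablePair α G y z) :
    ({y, z, w} : Set V).Pairwise (IsExtendablePair α (attachVertex G y z w)) := by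
  suffices hyzw : IsExtendablePair α (attachVertex G y z w) y z ∧
      IsExtendablePair α (attachVertex G y z w) y w ∧
        IsExtendablePair α (attachVertex G y z w) z w by
    simp [Set.pairwise_insert_of_symm, hyzw]
  rcases h with h | h | h
  · obtain ⟨fanYZ, fanYW, freeZW⟩ := h.pairs_attachVertex hw hwy hwz
    exact ⟨.inl fanYZ, .inl fanYW, .inr (.inr freeZW)⟩
  · obtain ⟨fanZY, fanZW, freeYW⟩ := attachVertex_comm G z y w ▸ h.pairs_attachVertex hw hwz hwy
    exact ⟨.inr (.inl fanZY), .inr (.inr freeYW), .inl fanZW⟩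
  · obtain ⟨freeYZ, fanYW, fanZW⟩ := h.pairs_attachVertex hw hwy hwz
    exact ⟨.inr (.inr freeYZ), .inl fanYW, .inl fanZW⟩

end Attach

end PairState

section Strip

variable {V α : Type*}

/-- The union of the complete graphs on `T 0, …, T m`, which for a triangle strip is the part built
by the first `m + 1` triangles. -/
@[simps]
def cliqueUnion (T : ℕ → Set V) (m : ℕ) : SimpleGraph V where
  Adj a b := a ≠ b ∧ ∃ j ≤ m, a ∈ T j ∧ b ∈ T j
  symm := ⟨fun _ _ ⟨hab, j, hj, ha, hb⟩ => ⟨hab.symm, j, hj, hb, ha⟩⟩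
  loopless := ⟨fun _ h => h.1 rfl⟩

variable {T : ℕ → Set V} {m : ℕ} {w y z : V}

theorem cliqueUnion_zero_of_triple (hT : T 0 = {y, z, w}) :
    cliqueUnion T 0 = attachVertex (edge y z) y z w := by
  ext a b
  simp only [cliqueUnion_adj, attachVertex, sup_adj, edge_adj, nonpos_iff_eq_zero, exists_eq_left,
    hT, Set.mem_insert_iff, Set.mem_singleton_iff]
  grind

theorem cliqueUnion_succ_of_triple (hy : y ∈ T m) (hz : z ∈ T m) (hT : T (m + 1) = {y, z, w}) :
    cliqueUnion T (m + 1) = attachVertex (cliqueUnion T m) y z w := by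
  have hm (a b : V) : (cliqueUnion T (m + 1)).Adj a b ↔
      (cliqueUnion T m).Adj a b ∨ a ≠ b ∧ a ∈ T (m + 1) ∧ b ∈ T (m + 1) := by
    simp only [cliqueUnion_adj, Nat.le_succ_iff]
    grind
  have hyz : y ≠ z → (cliqueUnion T m).Adj y z := fun h => ⟨h, m, le_rfl, hy, hz⟩
  ext a b
  simp only [hm, hT, attachVertex, sup_adj, edge_adj, Set.mem_insert_iff, Set.mem_singleton_iff]
  grind [SimpleGraph.adj_comm]

theorem isIsolated_cliqueUnion (hw : ∀ j ≤ m, w ∉ T j) : (cliqueUnion T m).IsIsolated w :=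
  fun _ ⟨_, j, hj, h, _⟩ => hw j hj h

theorem pairwise_isExtendablePair_zero (α : Type*) [Nontrivial α] (hT : (T 0).ncard = 3) :
    (T 0).Pairwise (IsExtendablePair α (cliqueUnion T 0)) := by
  obtain ⟨y, z, w, hyz, hyw, hzw, hT⟩ := Set.ncard_eq_three.1 hT
  have hw : (edge y z).IsIsolated w := by grind [IsIsolated]
  rw [cliqueUnion_zero_of_triple hT, hT]
  have hyz' : IsExtendablePair α (edge y z) y z := .inr (.inr (isFreePair_edge hyz))
  exact hyz'.pairwise_attachVertex hw hyw.symm hzw.symm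

theorem ncard_insert_sdiff_singleton {s : Set V} {x : V} (hx : x ∈ s) (hw : w ∉ s)
    (hs : s.Finite) : (insert w (s \ {x})).ncard = s.ncard := by
  rw [Set.ncard_insert_of_notMem (fun h => hw h.1) hs.sdiff,
    Set.ncard_sdiff_singleton_add_one hx hs]

theorem pairwise_isExtendablePair_succ [Nontrivial α] (hcard : (T m).ncard = 3) {x : V}
    (hx : x ∈ T m) (hw : ∀ j ≤ m, w ∉ T j) (hT : T (m + 1) = insert w (T m \ {x}))
    (h : (T m).Pairwise (IsExtendablePair α (cliqueUnion T m))) :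
    (T (m + 1)).Pairwise (IsExtendablePair α (cliqueUnion T (m + 1))) := by
  have hkept : (T m \ {x}).ncard = 2 := by rw [Set.ncard_sdiff_singleton_of_mem hx, hcard]
  obtain ⟨y, z, hyz, hxyz⟩ := Set.ncard_eq_two.1 hkept
  have hy : y ∈ T m := (hxyz ▸ Set.mem_insert y {z} : y ∈ T m \ {x}).1
  have hz : z ∈ T m := (hxyz ▸ Set.mem_insert_of_mem y rfl : z ∈ T m \ {x}).1
  have hwy : w ≠ y := fun e => hw m le_rfl (e ▸ hy)
  have hwz : w ≠ z := fun e => hw m le_rfl (e ▸ hz)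
  have hT' : T (m + 1) = {y, z, w} := by grind
  rw [cliqueUnion_succ_of_triple hy hz hT', hT']
  exact (h hy hz hyz).pairwise_attachVertex (isIsolated_cliqueUnion hw) hwy hwz

theorem exists_isStarColoring_cliqueUnion (α : Type*) [Nontrivial α] {N : ℕ}
    (hT0 : (T 0).ncard = 3)
    (hT : ∀ m < N, ∃ w, (∀ j ≤ m, w ∉ T j) ∧ ∃ x ∈ T m, T (m + 1) = insert w (T m \ {x})) :
    ∃ c : V → α, IsStarColoring (cliqueUnion T N) c := by
  have key : ∀ m ≤ N, (T m).ncard = 3 ∧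
      (T m).Pairwise (IsExtendablePair α (cliqueUnion T m)) := by
    intro m
    induction m with
    | zero => exact fun _ => ⟨hT0, pairwise_isExtendablePair_zero α hT0⟩
    | succ m ih =>
      intro hm
      obtain ⟨hcard, hpair⟩ := ih (by omega)
      obtain ⟨w, hw, x, hx, hstep⟩ := hT m hm
      refine ⟨?_, pairwise_isExtendablePair_succ hcard hx hw hstep hpair⟩
      rw [hstep, ncard_insert_sdiff_singleton hx (hw m le_rfl)
        (Set.finite_of_ncard_ne_zero (by omega)), hcard]
  obtain ⟨hcard, hpair⟩ := key N le_rfl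
  obtain ⟨y, z, x, hyz, -, -, hTN⟩ := Set.ncard_eq_three.1 hcard
  have hyzN : IsExtendablePair α (cliqueUnion T N) y z :=
    hpair (by simp [hTN]) (by simp [hTN]) hyz
  obtain ⟨c, hc⟩ := hyzN.exists_isStarForest
  exact ⟨c, isStarColoring_of_isStarForest hc⟩

theorem index_le_of_mem {n N : ℕ} {w : Fin n ↪ V} (hN : N + 3 ≤ n)
    (hT0 : ∀ i, w i ∈ T 0 → i.val ≤ 2)
    (hT : ∀ m (hm : m < N), T (m + 1) ⊆ insert (w ⟨m + 3, by omega⟩) (T m)) :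
    ∀ m ≤ N, ∀ i, w i ∈ T m → i.val ≤ m + 2 := by
  intro m
  induction m with
  | zero => exact fun _ => hT0
  | succ m ih =>
    intro hm i hi
    rcases hT m hm hi with hi | hi
    · simp [w.injective hi]
    · exact (ih (by omega) i hi).trans (by omega)

end Strip

/-- Every triangle strip admits a 2-star-coloring. A triangle strip
on `n ≥ 3` vertices is a graph whose vertices can be ordered `w 0, …, w (n-1)`
(here `w : Fin n ≃ V` is the ordering, 0-indexed) so that, with
`T 0 = {w 0, w 1, w 2}` and, for each `j = 1, …, n-3`, the triangle `T j`
obtained from `T (j-1)` by removing one of its vertices and adding the new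
vertex `w (j+2)`, the edge set of the graph is exactly the union over all `j`
of the three edges spanned by the vertices of `T j`. -/
theorem triangleStrip_two_star_colorable
    {n : ℕ} (hn : 3 ≤ n) {V : Type*} (G : SimpleGraph V)
    (w : Fin n ≃ V) (T : ℕ → Set V)
    (hT0 : T 0 = {w ⟨0, by omega⟩, w ⟨1, by omega⟩, w ⟨2, by omega⟩})
    (hTstep : ∀ j (hj1 : 1 ≤ j) (hj2 : j ≤ n - 3),
      ∃ x ∈ T (j - 1), T j = insert (w ⟨j + 2, by omega⟩) (T (j - 1) \ {x}))
    (hAdj : ∀ a b : V, G.Adj a b ↔ a ≠ b ∧ ∃ j ≤ n - 3, a ∈ T j ∧ b ∈ T j) :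
    ∃ c : V → Fin 2, IsStarColoring G c := by
  have hcard : (T 0).ncard = 3 :=
    Set.ncard_eq_three.2 ⟨_, _, _, by simp, by simp, by simp, hT0⟩
  have hstep (m : ℕ) (hm : m < n - 3) :
      ∃ x ∈ T m, T (m + 1) = insert (w ⟨m + 3, by omega⟩) (T m \ {x}) :=
    hTstep (m + 1) (by omega) (by omega)
  have hindex : ∀ m ≤ n - 3, ∀ i, w i ∈ T m → i.val ≤ m + 2 := by
    refine index_le_of_mem (w := w.toEmbedding) (by omega) ?_ fun m hm => ?_
    · simp [hT0]
    · obtain ⟨x, -, hx⟩ := hstep m hm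
      exact hx.le.trans (Set.insert_subset_insert Set.sdiff_subset)
  have hG : G = cliqueUnion T (n - 3) := by
    ext a b
    exact hAdj a b
  rw [hG]
  refine exists_isStarColoring_cliqueUnion (Fin 2) hcard fun m hm =>
    ⟨w ⟨m + 3, by omega⟩, ?_, hstep m hm⟩
  intro j hj hmem
  have : m + 3 ≤ j + 2 := hindex j (by omega) _ hmem
  omega
end

section
/- Let B be the graph with vertex set {u_1, u_2, v_1, v_2, v_3, v_4} and edges: u_1–u_2; the path edges v_1–v_2, v_2–v_3, v_3–v_4; and u_i–v_j for all i ∈ {1,2} and j ∈ {1,2,3,4}. In every 2-star-coloring c of B, the vertices u_1 and u_2 receive different colors. -/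
/-- The gadget graph `B`: vertices `0,1` are `u_1,u_2` and vertices `2,3,4,5`
are `v_1,v_2,v_3,v_4`; edges are `u_1–u_2`, the path `v_1–v_2–v_3–v_4`, and
`u_i–v_j` for all `i ∈ {1,2}`, `j ∈ {1,2,3,4}`. -/
def gadgetB : SimpleGraph (Fin 6) :=
  SimpleGraph.fromEdgeSet
    {s(0,1),
     s(2,3), s(3,4), s(4,5),
     s(0,2), s(0,3), s(0,4), s(0,5),
     s(1,2), s(1,3), s(1,4), s(1,5)}

/-!
If the ends of an edge `u w` share a color, then no common neighbor of `u` and `w` may have that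
color, as it would close a monochromatic triangle. With only two colors this makes the whole common
neighborhood monochromatic, which is impossible once it contains a path on four vertices.
-/

open SimpleGraph

namespace IsStarColoring

variable {V W α : Type*} {G : SimpleGraph V} {H : SimpleGraph W} {c : V → α}

theorem comp_copy (h : IsStarColoring G c) (f : Copy H G) : IsStarColoring H (c ∘ f) :=
  ⟨fun _ _ _ hxy hyz hxz ↦ h.1 _ _ _ (f.toHom.map_adj hxy) (f.toHom.map_adj hyz)
      (f.toHom.map_adj hxz),
    fun _ _ _ _ hab had hae hbd hbe hde eab ebd ede ↦
      h.2 _ _ _ _ (f.injective.ne hab) (f.injective.ne had) (f.injective.ne hae)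
        (f.injective.ne hbd) (f.injective.ne hbe) (f.injective.ne hde)
        (f.toHom.map_adj eab) (f.toHom.map_adj ebd) (f.toHom.map_adj ede)⟩

theorem exists_ne_of_pathGraph_four {c : Fin 4 → α} (h : IsStarColoring (pathGraph 4) c) :
    ∃ i j, c i ≠ c j := by
  by_contra! hmono
  exact h.2 0 1 2 3 (by decide) (by decide) (by decide) (by decide) (by decide) (by decide)
    (by simp [pathGraph_adj]) (by simp [pathGraph_adj]) (by simp [pathGraph_adj])
    ⟨hmono 0 1, hmono 1 2, hmono 2 3⟩

theorem ne_of_mem_commonNeighbors (h : IsStarColoring G c) {u w x : V} (huw : G.Adj u w)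
    (hc : c u = c w) (hx : x ∈ G.commonNeighbors u w) : c u ≠ c x :=
  fun hux ↦ h.1 u w x huw hx.2 hx.1 ⟨hc, hc ▸ hux⟩

theorem eq_of_mem_commonNeighbors [Fintype α] (hα : Fintype.card α ≤ 2) (h : IsStarColoring G c)
    {u w x y : V} (huw : G.Adj u w) (hc : c u = c w) (hx : x ∈ G.commonNeighbors u w)
    (hy : y ∈ G.commonNeighbors u w) : c x = c y := by
  by_contra hxy
  exact hα.not_gt <| Fintype.two_lt_card_iff.mpr
    ⟨c u, c x, c y, h.ne_of_mem_commonNeighbors huw hc hx, h.ne_of_mem_commonNeighbors huw hc hy,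
      hxy⟩

end IsStarColoring

theorem gadgetB_u1_u2_different_general {V α : Type*} [Fintype α] (hα : Fintype.card α ≤ 2)
    {G : SimpleGraph V} {c : V → α} (h : IsStarColoring G c) {u w : V} (huw : G.Adj u w)
    (hP : pathGraph 4 ⊑ G.induce (G.commonNeighbors u w)) : c u ≠ c w := by
  intro hc
  obtain ⟨f⟩ := hP
  obtain ⟨i, j, hij⟩ := (h.comp_copy ((Copy.induce G _).comp f)).exists_ne_of_pathGraph_four
  exact hij (h.eq_of_mem_commonNeighbors hα huw hc (f i).2 (f j).2)

namespace gadgetB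

theorem adj_zero_one : gadgetB.Adj 0 1 := by
  simp [gadgetB]

theorem natAdd_two_mem_commonNeighbors (i : Fin 4) :
    i.natAdd 2 ∈ gadgetB.commonNeighbors 0 1 := by
  fin_cases i <;> simp [gadgetB, mem_commonNeighbors]

theorem adj_natAdd_two {i j : Fin 4} (hij : (pathGraph 4).Adj i j) :
    gadgetB.Adj (i.natAdd 2) (j.natAdd 2) := by
  fin_cases i <;> fin_cases j <;> simp [pathGraph_adj, gadgetB] at hij ⊢

theorem pathGraph_four_isContained :
    pathGraph 4 ⊑ gadgetB.induce (gadgetB.commonNeighbors 0 1) :=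
  ⟨{ toHom := ⟨fun i ↦ ⟨i.natAdd 2, natAdd_two_mem_commonNeighbors i⟩, adj_natAdd_two⟩
     injective' := fun _ _ hij ↦ Fin.natAdd_injective 4 2 (congrArg Subtype.val hij) }⟩

end gadgetB

/-- In every 2-star-coloring of `B`, the vertices `u_1` and `u_2`
receive different colors. -/
theorem gadgetB_u1_u2_different (c : Fin 6 → Fin 2)
    (h : IsStarColoring gadgetB c) : c 0 ≠ c 1 := by
  exact gadgetB_u1_u2_different_general (Fintype.card_fin 2).le h gadgetB.adj_zero_one
    gadgetB.pathGraph_four_isContained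
end

section
/- Let B be the graph with vertex set {u_1, u_2, v_1, v_2, v_3, v_4} and edges: u_1–u_2; the path edges v_1–v_2, v_2–v_3, v_3–v_4; and u_i–v_j for all i ∈ {1,2} and j ∈ {1,2,3,4}. In every 2-star-coloring c of B, the colors alternate along the path v_1, v_2, v_3, v_4; that is, c(v_1) ≠ c(v_2), c(v_2) ≠ c(v_3), and c(v_3) ≠ c(v_4). -/
/-!
If adjacent vertices `u` and `w` share a color, then no common neighbor of theirs has that color,
as it would complete a monochromatic triangle. With only two colors all common neighbors then have
the other color, so a path on four of them is monochromatic. Hence `u` and `w` use both colors, and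
a monochromatic edge between common neighbors forms a monochromatic triangle with `u` or with `w`.
-/

open SimpleGraph

namespace IsStarColoring

variable {V α : Type*} {G : SimpleGraph V} {c : V → α} {u w x y : V}

theorem not_forall_pathGraph_color_eq (h : IsStarColoring G c) (p : (pathGraph 4).Copy G) :
    ¬ ∀ i j, c (p i) = c (p j) := by
  intro hmono
  have hne {i j : Fin 4} (hij : i ≠ j) : p i ≠ p j := p.injective.ne hij
  have hadj {i j : Fin 4} (hij : i.val + 1 = j.val) : G.Adj (p i) (p j) :=
    p.toHom.map_adj (pathGraph_adj.mpr (.inl hij))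
  exact h.2 (p 0) (p 1) (p 2) (p 3) (hne (by decide)) (hne (by decide)) (hne (by decide))
    (hne (by decide)) (hne (by decide)) (hne (by decide)) (hadj rfl) (hadj rfl) (hadj rfl)
    ⟨hmono 0 1, hmono 1 2, hmono 2 3⟩

theorem color_ne_of_mem_commonNeighbors (h : IsStarColoring G c) (huw : G.Adj u w)
    (hc : c u = c w) (hx : x ∈ G.commonNeighbors u w) : c x ≠ c u := fun hxu =>
  h.1 u w x huw hx.2 hx.1 ⟨hc, hc.symm.trans hxu.symm⟩

variable [Fintype α]

theorem color_ne_of_pathGraph_commonNeighbors (h : IsStarColoring G c)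
    (hα : Fintype.card α ≤ 2) (huw : G.Adj u w) (p : (pathGraph 4).Copy G)
    (hp : ∀ i, p i ∈ G.commonNeighbors u w) : c u ≠ c w := by
  intro hc
  have hpu (i : Fin 4) : c (p i) ≠ c u := h.color_ne_of_mem_commonNeighbors huw hc (hp i)
  refine h.not_forall_pathGraph_color_eq p fun i j => ?_
  by_contra hij
  exact hα.not_gt (Fintype.two_lt_card_iff.mpr ⟨_, _, _, hij, hpu i, hpu j⟩)

theorem color_ne_of_adj_commonNeighbors (h : IsStarColoring G c) (hα : Fintype.card α ≤ 2)
    (hc : c u ≠ c w) (hx : x ∈ G.commonNeighbors u w) (hy : y ∈ G.commonNeighbors u w)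
    (hxy : G.Adj x y) : c x ≠ c y := by
  intro hcxy
  have hux : c u ≠ c x := fun hcux => h.1 u x y hx.1 hxy hy.1 ⟨hcux, hcxy⟩
  have hwx : c w ≠ c x := fun hcwx => h.1 w x y hx.2 hxy hy.2 ⟨hcwx, hcxy⟩
  exact hα.not_gt (Fintype.two_lt_card_iff.mpr ⟨_, _, _, hc, hux, hwx⟩)

end IsStarColoring

theorem gadgetB_path_alternates_general {V α : Type*} [Fintype α] {G : SimpleGraph V}
    {c : V → α} {u w x y : V} (h : IsStarColoring G c) (hα : Fintype.card α ≤ 2)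
    (huw : G.Adj u w) (p : (pathGraph 4).Copy G) (hp : ∀ i, p i ∈ G.commonNeighbors u w)
    (hx : x ∈ G.commonNeighbors u w) (hy : y ∈ G.commonNeighbors u w) (hxy : G.Adj x y) :
    c x ≠ c y :=
  h.color_ne_of_adj_commonNeighbors hα
    (h.color_ne_of_pathGraph_commonNeighbors hα huw p hp) hx hy hxy

theorem gadgetB_adj_zero_one : gadgetB.Adj 0 1 := by
  simp [gadgetB]

theorem gadgetB_adj_natAdd_of_pathGraph_adj {i j : Fin 4} (hij : (pathGraph 4).Adj i j) :
    gadgetB.Adj (Fin.natAdd 2 i) (Fin.natAdd 2 j) := by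
  rw [pathGraph_adj] at hij
  fin_cases i <;> fin_cases j <;> simp_all [gadgetB]

theorem natAdd_mem_gadgetB_commonNeighbors (i : Fin 4) :
    Fin.natAdd 2 i ∈ gadgetB.commonNeighbors 0 1 := by
  fin_cases i <;> simp [gadgetB, mem_commonNeighbors]

/-- The path `v_1, v_2, v_3, v_4` of `B`, as a copy of `pathGraph 4`; the vertex `i : Fin 4`
stands for `v_{i+1}`, which is the vertex `2 + i` of `gadgetB`. -/
def gadgetBPath : (pathGraph 4).Copy gadgetB where
  toHom := ⟨Fin.natAdd 2, gadgetB_adj_natAdd_of_pathGraph_adj⟩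
  injective' := Fin.natAdd_injective 4 2

/-- In every 2-star-coloring of `B`, the colors alternate along the
path `v_1, v_2, v_3, v_4`. -/
theorem gadgetB_path_alternates (c : Fin 6 → Fin 2)
    (h : IsStarColoring gadgetB c) :
    c 2 ≠ c 3 ∧ c 3 ≠ c 4 ∧ c 4 ≠ c 5 := by
  have hne (i : Fin 3) := gadgetB_path_alternates_general h (Fintype.card_fin 2).le
    gadgetB_adj_zero_one gadgetBPath natAdd_mem_gadgetB_commonNeighbors
    (natAdd_mem_gadgetB_commonNeighbors i.castSucc) (natAdd_mem_gadgetB_commonNeighbors i.succ)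
    (gadgetBPath.toHom.map_adj (pathGraph_adj.mpr (.inl rfl)))
  exact ⟨hne 0, hne 1, hne 2⟩
end

section
/- For k ≥ 1, let the chain of length k be the graph with vertices u_1^i, u_2^i, v_1^i, v_2^i, v_3^i, v_4^i for i = 1, …, k, where for each i the edges are u_1^i–u_2^i, the path edges v_1^i–v_2^i, v_2^i–v_3^i, v_3^i–v_4^i, and u_a^i–v_b^i for all a ∈ {1,2}, b ∈ {1,2,3,4}, together with the connecting edges v_4^i–v_1^{i+1} for i = 1, …, k−1. In every 2-star-coloring c of the chain of length k, the colors alternate along the entire spine-path v_1^1, v_2^1, v_3^1, v_4^1, v_1^2, …, v_4^k; that is, any two consecutive vertices on this path receive different colors. In particular, all odd-positioned vertices of the spine-path receive one color and all even-positioned vertices receive the other. -/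
/-- The chain of length `k`: for each `i : Fin k`, the vertices `(i, 0), (i, 1)`
are `u_1^i, u_2^i` and `(i, 2), (i, 3), (i, 4), (i, 5)` are
`v_1^i, v_2^i, v_3^i, v_4^i`. Within each copy the edges are `u_1^i–u_2^i`, the
path `v_1^i–v_2^i–v_3^i–v_4^i`, and `u_a^i–v_b^i` for all `a ∈ {1,2}`,
`b ∈ {1,2,3,4}`; consecutive copies are connected by the edges
`v_4^i–v_1^{i+1}`. -/
def chainGraph (k : ℕ) : SimpleGraph (Fin k × Fin 6) :=
  SimpleGraph.fromRel (fun x y =>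
    (x.1 = y.1 ∧ ((x.2 = 0 ∧ y.2 = 1) ∨ (x.2 = 2 ∧ y.2 = 3) ∨ (x.2 = 3 ∧ y.2 = 4) ∨
      (x.2 = 4 ∧ y.2 = 5) ∨ (x.2 ≤ 1 ∧ 2 ≤ y.2))) ∨
    ((x.1 : ℕ) + 1 = (y.1 : ℕ) ∧ x.2 = 5 ∧ y.2 = 2))

/-- The `p`-th vertex (0-indexed) of the spine-path
`v_1^1, v_2^1, v_3^1, v_4^1, v_1^2, …, v_4^k` of the chain of length `k`. -/
def spineVertex (k : ℕ) (p : ℕ) (hp : p < 4 * k) : Fin k × Fin 6 :=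
  (⟨p / 4, by omega⟩, ⟨p % 4 + 2, by omega⟩)

/-!
The two hubs of a copy cannot share a color, since then the four spine vertices joined to both of
them would all take the other color and form a monochromatic path. Hence both colors occur among
the hubs of each copy, and every spine vertex has a hub neighbor of its own color. If two adjacent
spine vertices had equal colors, their edge together with these two hub neighbors would be a
monochromatic triangle or path on four vertices.
-/

namespace IsStarColoring

variable {V : Type*} {G : SimpleGraph V}

theorem ne_of_adj_of_eq_color_neighbors {α : Type*} {c : V → α} (h : IsStarColoring G c)
    {u x y w : V} (hux : G.Adj u x) (hxy : G.Adj x y) (hyw : G.Adj y w) (huy : u ≠ y)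
    (hxw : x ≠ w) (hcu : c u = c x) (hcw : c y = c w) : c x ≠ c y := by
  intro hc
  obtain rfl | huw := eq_or_ne u w
  · exact h.1 u x y hux hxy hyw.symm ⟨hcu, hc⟩
  · exact h.2 u x y w hux.ne huy huw hxy.ne hxw hyw.ne hux hxy hyw ⟨hcu, hc, hcw⟩

theorem ne_of_adj_of_forall_adj_path {c : V → Fin 2} (h : IsStarColoring G c) {u w : V}
    (huw : G.Adj u w) (P : (SimpleGraph.pathGraph 4).Copy G) (hu : ∀ i, G.Adj u (P i))
    (hw : ∀ i, G.Adj w (P i)) : c u ≠ c w := by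
  intro hc
  have ne_hub (i : Fin 4) : c w ≠ c (P i) := fun hi =>
    h.1 u w (P i) huw (hw i) (hu i) ⟨hc, hi⟩
  have eq_color (i j : Fin 4) : c (P i) = c (P j) := by
    have := ne_hub i
    have := ne_hub j
    omega
  have ne {i j : Fin 4} (hij : i ≠ j) : P i ≠ P j := P.injective.ne hij
  have adj {i j : Fin 4} (hij : (i : ℕ) + 1 = j) : G.Adj (P i) (P j) :=
    P.toHom.map_adj (SimpleGraph.pathGraph_adj.mpr (.inl hij))
  exact h.2 (P 0) (P 1) (P 2) (P 3) (ne (by decide)) (ne (by decide)) (ne (by decide))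
    (ne (by decide)) (ne (by decide)) (ne (by decide)) (adj rfl) (adj rfl) (adj rfl)
    ⟨eq_color 0 1, eq_color 1 2, eq_color 2 3⟩

end IsStarColoring

theorem eq_iff_mod_two_eq_of_forall_ne_succ {n : ℕ} {f : Fin n → Fin 2}
    (hf : ∀ p (hp : p + 1 < n), f ⟨p, Nat.lt_of_succ_lt hp⟩ ≠ f ⟨p + 1, hp⟩) (i j : Fin n) :
    f i = f j ↔ (i : ℕ) % 2 = j % 2 := by
  have eq_zero_iff (p : ℕ) (hp : p < n) : f ⟨p, hp⟩ = f ⟨0, i.pos⟩ ↔ p % 2 = 0 := by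
    induction p with
    | zero => simp
    | succ p ih =>
      have := ih (by omega)
      have := hf p hp
      omega
  have hi : f i = f ⟨0, i.pos⟩ ↔ (i : ℕ) % 2 = 0 := eq_zero_iff i i.isLt
  have hj : f j = f ⟨0, i.pos⟩ ↔ (j : ℕ) % 2 = 0 := eq_zero_iff j j.isLt
  omega

section ChainGraph

variable {k : ℕ}

theorem chainGraph_adj_hubs (i : Fin k) : (chainGraph k).Adj (i, 0) (i, 1) := by
  simp [chainGraph]

theorem chainGraph_adj_hub_spine (i : Fin k) {a b : Fin 6} (ha : a ≤ 1) (hb : 2 ≤ b) :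
    (chainGraph k).Adj (i, a) (i, b) := by
  have hab : a ≠ b := by omega
  simp [chainGraph, ha, hb, hab]

theorem chainGraph_adj_spine (i : Fin k) {a b : Fin 6} (ha : 2 ≤ a) (hab : (a : ℕ) + 1 = b) :
    (chainGraph k).Adj (i, a) (i, b) := by
  have hne : a ≠ b := by omega
  have hcases : a = 2 ∧ b = 3 ∨ a = 3 ∧ b = 4 ∨ a = 4 ∧ b = 5 := by omega
  rw [chainGraph, SimpleGraph.fromRel_adj]
  exact ⟨by simp [hne], .inl (.inl ⟨rfl, by tauto⟩)⟩

theorem chainGraph_adj_link {i j : Fin k} (hij : (i : ℕ) + 1 = j) :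
    (chainGraph k).Adj (i, 5) (j, 2) := by
  simp [chainGraph, hij]

theorem chainGraph_adj_spineVertex_succ {p : ℕ} (hp : p + 1 < 4 * k) :
    (chainGraph k).Adj (spineVertex k p (Nat.lt_of_succ_lt hp)) (spineVertex k (p + 1) hp) := by
  by_cases hlast : p % 4 = 3
  · have hleft : spineVertex k p (Nat.lt_of_succ_lt hp) = (⟨p / 4, by omega⟩, 5) := by
      simp [spineVertex, hlast]
    have hdiv : (p + 1) / 4 = p / 4 + 1 := by omega
    have hmod : (p + 1) % 4 = 0 := by omega
    have hright : spineVertex k (p + 1) hp = (⟨p / 4 + 1, by omega⟩, 2) := by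
      simp [spineVertex, hdiv, hmod]
    rw [hleft, hright]
    exact chainGraph_adj_link rfl
  · have hdiv : (p + 1) / 4 = p / 4 := by omega
    have hmod : (p + 1) % 4 = p % 4 + 1 := by omega
    have hright : spineVertex k (p + 1) hp = (⟨p / 4, by omega⟩, ⟨p % 4 + 3, by omega⟩) := by
      simp [spineVertex, hdiv, hmod]
    rw [hright]
    exact chainGraph_adj_spine _ (by simp [Fin.le_def]) rfl

/-- The path `v_1^i, v_2^i, v_3^i, v_4^i` of the `i`-th copy, as a copy of the four-vertex path
in the chain; its vertices, indexed from `0`, are shifted by `2` past the two hubs. -/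
def chainSpineCopy (i : Fin k) : (SimpleGraph.pathGraph 4).Copy (chainGraph k) where
  toHom :=
    { toFun := fun b => (i, b.natAdd 2)
      map_rel' := fun {a b} hab => by
        obtain hab | hba := SimpleGraph.pathGraph_adj.mp hab
        · exact chainGraph_adj_spine i (by simp [Fin.le_def]) (congrArg (2 + ·) hab)
        · exact (chainGraph_adj_spine i (by simp [Fin.le_def]) (congrArg (2 + ·) hba)).symm }
  injective' := fun a b hab => Fin.natAdd_injective 4 2 (congrArg Prod.snd hab)

variable {c : Fin k × Fin 6 → Fin 2}

namespace IsStarColoring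

theorem chainGraph_hub_ne (h : IsStarColoring (chainGraph k) c) (i : Fin k) :
    c (i, 0) ≠ c (i, 1) :=
  h.ne_of_adj_of_forall_adj_path (chainGraph_adj_hubs i) (chainSpineCopy i)
    (fun b => chainGraph_adj_hub_spine i (by decide) (Fin.le_def.mpr (by simp)))
    (fun b => chainGraph_adj_hub_spine i (by decide) (Fin.le_def.mpr (by simp)))

theorem chainGraph_exists_hub_eq (h : IsStarColoring (chainGraph k) c) (i : Fin k)
    (color : Fin 2) : ∃ a ≤ 1, c (i, a) = color := by
  have := h.chainGraph_hub_ne i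
  obtain h0 | h1 : c (i, 0) = color ∨ c (i, 1) = color := by omega
  · exact ⟨0, by decide, h0⟩
  · exact ⟨1, by decide, h1⟩

theorem chainGraph_spineVertex_ne_succ (h : IsStarColoring (chainGraph k) c) {p : ℕ}
    (hp : p + 1 < 4 * k) :
    c (spineVertex k p (Nat.lt_of_succ_lt hp)) ≠ c (spineVertex k (p + 1) hp) := by
  have exists_hub (q : ℕ) (hq : q < 4 * k) : ∃ u : Fin k × Fin 6, u.2 ≤ 1 ∧
      (chainGraph k).Adj u (spineVertex k q hq) ∧ c u = c (spineVertex k q hq) := by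
    obtain ⟨a, ha, hca⟩ := h.chainGraph_exists_hub_eq ⟨q / 4, by omega⟩ (c (spineVertex k q hq))
    exact ⟨_, ha, chainGraph_adj_hub_spine _ ha (by simp [Fin.le_def]), hca⟩
  have hub_ne {u : Fin k × Fin 6} (hu : u.2 ≤ 1) (q : ℕ) (hq : q < 4 * k) :
      u ≠ spineVertex k q hq := by
    rintro rfl
    simp [spineVertex, Fin.le_def] at hu
  obtain ⟨u, hu, hux, hcu⟩ := exists_hub p (Nat.lt_of_succ_lt hp)
  obtain ⟨w, hw, hwy, hcw⟩ := exists_hub (p + 1) hp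
  exact h.ne_of_adj_of_eq_color_neighbors hux (chainGraph_adj_spineVertex_succ hp) hwy.symm
    (hub_ne hu _ _) (hub_ne hw _ _).symm hcu hcw.symm

end IsStarColoring

end ChainGraph

/-- In every 2-star-coloring of the chain of length `k ≥ 1`, any
two consecutive vertices of the spine-path receive different colors; in
particular, the odd-positioned spine vertices all get one color and the
even-positioned ones get the other (two spine vertices have the same color iff
their positions have the same parity). -/
theorem chainGraph_spine_alternates (k : ℕ) (hk : 1 ≤ k)
    (c : Fin k × Fin 6 → Fin 2) (h : IsStarColoring (chainGraph k) c) :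
    (∀ p (hp : p + 1 < 4 * k),
      c (spineVertex k p (by omega)) ≠ c (spineVertex k (p + 1) hp)) ∧
    (∀ p q (hp : p < 4 * k) (hq : q < 4 * k),
      c (spineVertex k p hp) = c (spineVertex k q hq) ↔ p % 2 = q % 2) :=
  ⟨fun _ hp => h.chainGraph_spineVertex_ne_succ hp, fun p q hp hq =>
    eq_iff_mod_two_eq_of_forall_ne_succ (f := fun i : Fin (4 * k) => c (spineVertex k i i.isLt))
      (fun _ hp => h.chainGraph_spineVertex_ne_succ hp) ⟨p, hp⟩ ⟨q, hq⟩⟩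
end

section
/- Let C be the graph with vertex set {u, u_{11}, u_{12}, u_{13}, u_{21}, u_{22}, u_{23}} whose edges are the 2×3 grid edges u_{i1}–u_{i2} and u_{i2}–u_{i3} for i ∈ {1,2} and u_{1j}–u_{2j} for j ∈ {1,2,3}, together with the two edges u–u_{11} and u–u_{23}. In every 2-star-coloring c of C, the three vertices u, u_{11}, u_{23} do not all receive the same color. Moreover, C is triangle-free. -/
/-- The clause-gadget graph `C`: vertex `0` is `u`, vertices `1,2,3` are
`u_{11}, u_{12}, u_{13}` and vertices `4,5,6` are `u_{21}, u_{22}, u_{23}`;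
edges are those of the 2×3 grid together with `u–u_{11}` and `u–u_{23}`. -/
def clauseGadget : SimpleGraph (Fin 7) :=
  SimpleGraph.fromEdgeSet
    {s(1,2), s(2,3), s(4,5), s(5,6),
     s(1,4), s(2,5), s(3,6),
     s(0,1), s(0,6)}

namespace IsStarColoring

variable {V α : Type*} {G : SimpleGraph V} {c : V → α} {v w x y : V}

theorem not_monochromatic_path (hc : IsStarColoring G c)
    (hadj : [v, w, x, y].IsChain G.Adj) (hnodup : [v, w, x, y].Nodup) :
    ¬(c v = c w ∧ c w = c x ∧ c x = c y) := by
  obtain ⟨hvw, hwx, hxy⟩ : G.Adj v w ∧ G.Adj w x ∧ G.Adj x y := by simpa using hadj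
  obtain ⟨⟨-, hvx, hvy⟩, ⟨-, hwy⟩, -⟩ :
      (v ≠ w ∧ v ≠ x ∧ v ≠ y) ∧ (w ≠ x ∧ w ≠ y) ∧ x ≠ y := by simpa using hnodup
  exact hc.2 v w x y hvw.ne hvx hvy hwx.ne hwy hxy.ne hvw hwx hxy

theorem ne_of_extends_monochromatic_path (hc : IsStarColoring G c)
    (hadj : [v, w, x, y].IsChain G.Adj) (hnodup : [v, w, x, y].Nodup)
    (hwx : c w = c x) (hxy : c x = c y) : c v ≠ c w :=
  fun hvw ↦ hc.not_monochromatic_path hadj hnodup ⟨hvw, hwx, hxy⟩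

end IsStarColoring

theorem eq_of_ne_of_ne_of_encard_le_two {α : Type*} {s : Set α} (hs : s.encard ≤ 2)
    {a b d : α} (ha : a ∈ s) (hb : b ∈ s) (hd : d ∈ s) (had : a ≠ d) (hbd : b ≠ d) : a = b := by
  by_contra hab
  have hthree : ({a, b, d} : Set α).encard = 3 :=
    Set.encard_eq_three.2 ⟨a, b, d, hab, had, hbd, rfl⟩
  have hsub : ({a, b, d} : Set α) ⊆ s := by
    simp only [Set.insert_subset_iff, Set.singleton_subset_iff, ha, hb, hd, and_self]
  have hle : (3 : ℕ∞) ≤ 2 := hthree ▸ (Set.encard_le_encard hsub).trans hs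
  exact absurd hle (by decide)

theorem cliqueFree_succ_of_cliqueFreeOn {V : Type*} {G : SimpleGraph V} {v : V} {n : ℕ}
    (hneighbors : G.CliqueFreeOn (G.neighborSet v) n) (hcompl : G.CliqueFreeOn {v}ᶜ (n + 1)) :
    G.CliqueFree (n + 1) := by
  classical
  intro s hs
  by_cases hv : v ∈ s
  · refine hneighbors (fun w hw ↦ ?_) (hs.erase_of_mem hv)
    obtain ⟨hwv, hws⟩ := Finset.mem_erase.1 hw
    exact hs.isClique hv hws hwv.symm
  · exact hcompl (Set.subset_compl_singleton_iff.2 hv) hs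

namespace clauseGadget

instance : DecidableRel clauseGadget.Adj := by
  unfold clauseGadget
  infer_instance

theorem not_monochromatic {α : Type*} {c : Fin 7 → α} (hc : IsStarColoring clauseGadget c)
    (hcard : (Set.range c).encard ≤ 2) : ¬(c 0 = c 1 ∧ c 1 = c 6) := by
  rintro ⟨h01, h16⟩
  have h06 : c 0 = c 6 := h01.trans h16
  have h2 : c 2 ≠ c 1 := hc.ne_of_extends_monochromatic_path
    (by decide : [2, 1, 0, 6].IsChain clauseGadget.Adj) (by decide) h01.symm h06
  have h4 : c 4 ≠ c 1 := hc.ne_of_extends_monochromatic_path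
    (by decide : [4, 1, 0, 6].IsChain clauseGadget.Adj) (by decide) h01.symm h06
  have h3 : c 3 ≠ c 1 := h16 ▸ hc.ne_of_extends_monochromatic_path
    (by decide : [3, 6, 0, 1].IsChain clauseGadget.Adj) (by decide) h06.symm h01
  have h5 : c 5 ≠ c 1 := h16 ▸ hc.ne_of_extends_monochromatic_path
    (by decide : [5, 6, 0, 1].IsChain clauseGadget.Adj) (by decide) h06.symm h01
  have heq {x y : Fin 7} (hx : c x ≠ c 1) (hy : c y ≠ c 1) : c x = c y :=
    eq_of_ne_of_ne_of_encard_le_two hcard ⟨x, rfl⟩ ⟨y, rfl⟩ ⟨1, rfl⟩ hx hy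
  exact hc.not_monochromatic_path
    (by decide : [3, 2, 5, 4].IsChain clauseGadget.Adj) (by decide)
    ⟨heq h3 h2, heq h2 h5, heq h5 h4⟩

theorem pairwise_not_adj_neighborSet_zero :
    (clauseGadget.neighborSet 0).Pairwise clauseGadget.Adjᶜ := by
  have h : ∀ x y, clauseGadget.Adj 0 x → clauseGadget.Adj 0 y → ¬clauseGadget.Adj x y := by
    decide
  exact fun x hx y hy _ ↦ h x y hx hy

theorem induce_compl_zero_colorable_two : (clauseGadget.induce {0}ᶜ).Colorable 2 := by
  have h : ∀ x y : Fin 7, x ≠ 0 → y ≠ 0 → clauseGadget.Adj x y →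
      Fin.ofNat 2 x ≠ Fin.ofNat 2 y := by
    decide
  exact ⟨.mk (fun x ↦ Fin.ofNat 2 x) fun {x y} hxy ↦ h x y x.2 y.2 hxy⟩

theorem cliqueFree_three : clauseGadget.CliqueFree 3 :=
  cliqueFree_succ_of_cliqueFreeOn
    ((SimpleGraph.cliqueFreeOn_two _).2 pairwise_not_adj_neighborSet_zero)
    ((SimpleGraph.cliqueFree_induce_iff _ _ _).1
      (induce_compl_zero_colorable_two.cliqueFree (by decide)))

end clauseGadget

theorem clauseGadget_not_monochromatic_and_triangleFree_general {α : Type*} :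
    (∀ c : Fin 7 → α, IsStarColoring clauseGadget c → (Set.range c).encard ≤ 2 →
      ¬(c 0 = c 1 ∧ c 1 = c 6)) ∧
    clauseGadget.CliqueFree 3 :=
  ⟨fun _ ↦ clauseGadget.not_monochromatic, clauseGadget.cliqueFree_three⟩

/-- In every 2-star-coloring of the clause-gadget, the three
clause-vertices `u`, `u_{11}`, `u_{23}` do not all receive the same color.
Moreover, the clause-gadget is triangle-free. -/
theorem clauseGadget_not_monochromatic_and_triangleFree :
    (∀ c : Fin 7 → Fin 2, IsStarColoring clauseGadget c →
      ¬(c 0 = c 1 ∧ c 1 = c 6)) ∧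
    clauseGadget.CliqueFree 3 :=
  have general := clauseGadget_not_monochromatic_and_triangleFree_general (α := Fin 2)
  ⟨fun c hc ↦ general.1 c hc (Set.encard_le_card.trans (by simp)), general.2⟩
end

section
/- Let G be any finite simple graph, and let H be the graph obtained from G by attaching a copy of K_6 at each vertex: for every vertex v of G, add five new vertices (distinct for different v), make these five new vertices pairwise adjacent, and make each of them adjacent to v, so that v together with its five new vertices induces a complete graph K_6 in H. Then H admits a 3-star-coloring if and only if G admits a proper 3-coloring (a coloring with 3 colors in which adjacent vertices always receive distinct colors). -/
/-- The graph `H` obtained from `G` by attaching a copy of `K_6` at each vertex: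
for every vertex `v` of `G` we add five new vertices `(v, 0), …, (v, 4)`, make
them pairwise adjacent, and make each of them adjacent to `v`, so that `v`
together with its five new vertices induces a `K_6`. -/
def attachK6 {V : Type*} (G : SimpleGraph V) : SimpleGraph (V ⊕ V × Fin 5) :=
  SimpleGraph.fromRel (fun x y =>
    match x, y with
    | Sum.inl u, Sum.inl v => G.Adj u v
    | Sum.inl u, Sum.inr (v, _) => u = v
    | Sum.inr (u, _), Sum.inr (v, _) => u = v
    | _, _ => False)

section StarColoring

variable {V W α : Type*} {G : SimpleGraph V} {H : SimpleGraph W} {c : V → α}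

theorem isStarColoring_of_unique_adj_color_eq
    (h : ∀ x y z, G.Adj x y → G.Adj x z → c y = c x → c z = c x → y = z) :
    IsStarColoring G c := by
  refine ⟨fun x y z hxy hyz hxz ⟨cxy, cyz⟩ ↦ ?_,
    fun a b d _ _ had _ _ _ _ hab hbd _ ⟨cab, cbd, _⟩ ↦ ?_⟩
  · exact hxz.ne (h y x z hxy.symm hyz cxy cyz.symm)
  · exact had (h b a d hab.symm hbd cab cbd.symm)

namespace IsStarColoring

theorem comp_injective_hom {c : W → α} (hc : IsStarColoring H c) (f : G →g H)
    (hf : Function.Injective f) : IsStarColoring G (c ∘ f) :=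
  ⟨fun _ _ _ hxy hyz hxz ↦ hc.1 _ _ _ (f.map_adj hxy) (f.map_adj hyz) (f.map_adj hxz),
    fun _ _ _ _ nab nad nae nbd nbe nde hab hbd hde ↦
      hc.2 _ _ _ _ (hf.ne nab) (hf.ne nad) (hf.ne nae) (hf.ne nbd) (hf.ne nbe) (hf.ne nde)
        (f.map_adj hab) (f.map_adj hbd) (f.map_adj hde)⟩

theorem color_ne_of_adj (hc : IsStarColoring G c) {u v u' v' : V} (huv : G.Adj u v)
    (hu : G.Adj u u') (hv : G.Adj v v') (hu'v : u' ≠ v) (huv' : u ≠ v')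
    (cu : c u' = c u) (cv : c v' = c v) : c u ≠ c v := by
  intro cuv
  by_cases hu'v' : u' = v'
  · subst hu'v'
    exact hc.1 u' u v hu.symm huv hv.symm ⟨cu, cuv⟩
  · exact hc.2 u' u v v' hu.ne' hu'v hu'v' huv.ne huv' hv.ne hu.symm huv hv ⟨cu, cuv, cv.symm⟩

theorem card_filter_color_eq_le_two [DecidableEq α] (hc : IsStarColoring G c) {s : Finset V}
    (hs : G.IsClique s) (a : α) : (s.filter (c · = a)).card ≤ 2 := by
  by_contra! hcard
  obtain ⟨x, hx, y, hy, z, hz, hxy, hxz, hyz⟩ := Finset.two_lt_card.mp hcard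
  rw [Finset.mem_filter] at hx hy hz
  exact hc.1 x y z (hs hx.1 hy.1 hxy) (hs hy.1 hz.1 hyz) (hs hx.1 hz.1 hxz)
    ⟨hx.2.trans hy.2.symm, hy.2.trans hz.2.symm⟩

theorem exists_ne_color_eq_of_isClique [Fintype α] (hc : IsStarColoring G c) {s : Finset V}
    (hs : G.IsClique s) (hcard : 2 * Fintype.card α ≤ s.card) {v : V} (hv : v ∈ s) :
    ∃ w ∈ s, w ≠ v ∧ c w = c v := by
  classical
  by_contra! hne
  have hmaps : ∀ w ∈ s.erase v, c w ∈ Finset.univ.erase (c v) := fun w hw ↦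
    Finset.mem_erase.mpr
      ⟨hne w (Finset.mem_of_mem_erase hw) (Finset.ne_of_mem_erase hw), Finset.mem_univ _⟩
  have hle : (s.erase v).card ≤ 2 * (Finset.univ.erase (c v)).card :=
    Finset.card_le_mul_card_image_of_maps_to hmaps 2 fun a _ ↦
      hc.card_filter_color_eq_le_two (hs.subset (Finset.coe_subset.mpr (s.erase_subset v))) a
  have hpos : 0 < Fintype.card α := Fintype.card_pos_iff.mpr ⟨c v⟩
  rw [Finset.card_erase_of_mem hv, Finset.card_erase_of_mem (Finset.mem_univ _),
    Finset.card_univ] at hle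
  omega

end IsStarColoring

theorem exists_isStarColoring_congr (e : G ≃g H) :
    (∃ c : V → α, IsStarColoring G c) ↔ ∃ c : W → α, IsStarColoring H c :=
  ⟨fun ⟨_, hc⟩ ↦ ⟨_, hc.comp_injective_hom e.symm.toHom e.symm.injective⟩,
    fun ⟨_, hc⟩ ↦ ⟨_, hc.comp_injective_hom e.toHom e.injective⟩⟩

end StarColoring

section AttachClique

variable {V ι α : Type*}

/-- The graph obtained from `G` by attaching a complete graph on `ι` at each vertex `v`: the clique
at `v` is `{v} × ι`, and `(v, r)` plays the role of `v` itself. -/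
def attachClique (G : SimpleGraph V) (r : ι) : SimpleGraph (V × ι) where
  Adj x y := x.1 = y.1 ∧ x.2 ≠ y.2 ∨ x.2 = r ∧ y.2 = r ∧ G.Adj x.1 y.1
  symm := ⟨fun _ _ ↦ Or.imp (And.imp Eq.symm Ne.symm) fun ⟨hx, hy, h⟩ ↦ ⟨hy, hx, h.symm⟩⟩
  loopless := ⟨fun _ h ↦ h.elim (fun h ↦ h.2 rfl) fun h ↦ G.loopless.irrefl _ h.2.2⟩

namespace attachClique

variable {G : SimpleGraph V} {r : ι}

theorem adj_iff {x y : V × ι} : (attachClique G r).Adj x y ↔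
    x.1 = y.1 ∧ x.2 ≠ y.2 ∨ x.2 = r ∧ y.2 = r ∧ G.Adj x.1 y.1 :=
  Iff.rfl

theorem adj_of_ne (v : V) {i j : ι} (hij : i ≠ j) : (attachClique G r).Adj (v, i) (v, j) :=
  adj_iff.mpr (.inl ⟨rfl, hij⟩)

theorem adj_root {u v : V} (huv : G.Adj u v) : (attachClique G r).Adj (u, r) (v, r) :=
  adj_iff.mpr (.inr ⟨rfl, rfl, huv⟩)

theorem exists_ne_color_eq [Fintype ι] [Fintype α]
    (hcard : 2 * Fintype.card α ≤ Fintype.card ι) {c : V × ι → α}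
    (hc : IsStarColoring (attachClique G r) c) (v : V) (i : ι) :
    ∃ j, j ≠ i ∧ c (v, j) = c (v, i) := by
  let s : Finset (V × ι) := Finset.univ.map (Function.Embedding.sectR v ι)
  have hs : (attachClique G r).IsClique s := by
    intro x hx y hy hxy
    obtain ⟨j, -, rfl⟩ := Finset.mem_map.mp hx
    obtain ⟨k, -, rfl⟩ := Finset.mem_map.mp hy
    exact adj_of_ne v (ne_of_apply_ne (Prod.mk v) hxy)
  have hscard : 2 * Fintype.card α ≤ s.card := by rwa [Finset.card_map, Finset.card_univ]
  obtain ⟨w, hw, hwi, hcw⟩ := hc.exists_ne_color_eq_of_isClique hs hscard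
    (Finset.mem_map_of_mem _ (Finset.mem_univ i))
  obtain ⟨j, -, rfl⟩ := Finset.mem_map.mp hw
  exact ⟨j, ne_of_apply_ne (Prod.mk v) hwi, hcw⟩

theorem root_color_ne [Fintype ι] [Fintype α]
    (hcard : 2 * Fintype.card α ≤ Fintype.card ι) {c : V × ι → α}
    (hc : IsStarColoring (attachClique G r) c) {u v : V} (huv : G.Adj u v) :
    c (u, r) ≠ c (v, r) := by
  obtain ⟨i, hi, hci⟩ := exists_ne_color_eq hcard hc u r
  obtain ⟨j, hj, hcj⟩ := exists_ne_color_eq hcard hc v r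
  exact hc.color_ne_of_adj (adj_root huv) (adj_of_ne u hi.symm) (adj_of_ne v hj.symm)
    (ne_of_apply_ne Prod.snd hi) (ne_of_apply_ne Prod.snd hj.symm) hci hcj

/-- The extension to `attachClique G r` of a coloring `c` of `G`. The bijection `e` pairs up the
vertices of each clique and assigns a color to every pair; in the clique at `v`, two colors are
then exchanged so that the root `(v, r)` receives `c v`. -/
def extendColoring [DecidableEq α] (e : ι ≃ α × Bool) (r : ι) (c : V → α) (x : V × ι) : α :=
  Equiv.swap (e r).1 (c x.1) (e x.2).1

/-- The vertex paired with `x` by `e` in the clique of `x`; it is the only other vertex of that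
clique that has the color of `x` in an extended coloring. -/
def partner (e : ι ≃ α × Bool) (x : V × ι) : V × ι :=
  (x.1, e.symm ((e x.2).1, !(e x.2).2))

section ExtendColoring

variable [DecidableEq α] (e : ι ≃ α × Bool)

theorem extendColoring_root (r : ι) (c : V → α) (v : V) : extendColoring e r c (v, r) = c v :=
  Equiv.swap_apply_left _ _

theorem fst_eq_of_adj_of_extendColoring_eq (c : G.Coloring α) {x y : V × ι}
    (hxy : (attachClique G r).Adj x y)
    (hc : extendColoring e r c x = extendColoring e r c y) : x.1 = y.1 := by
  obtain ⟨u, i⟩ := x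
  obtain ⟨v, j⟩ := y
  obtain ⟨huv, -⟩ | ⟨rfl, rfl, huv⟩ := hxy
  · exact huv
  · rw [extendColoring_root, extendColoring_root] at hc
    exact absurd hc (c.valid huv)

theorem eq_partner_of_adj_of_extendColoring_eq (c : G.Coloring α) {x y : V × ι}
    (hxy : (attachClique G r).Adj x y)
    (hc : extendColoring e r c y = extendColoring e r c x) :
    y = partner e x := by
  have hfst : x.1 = y.1 := fst_eq_of_adj_of_extendColoring_eq e c hxy hc.symm
  have hcolor : (e y.2).1 = (e x.2).1 := by
    rw [extendColoring, extendColoring, hfst] at hc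
    exact (Equiv.injective _) hc
  have hbit : (e y.2).2 = !(e x.2).2 :=
    Bool.eq_not.mpr fun h ↦ hxy.ne (Prod.ext hfst (e.injective (Prod.ext hcolor h).symm))
  exact Prod.ext hfst.symm (e.eq_symm_apply.mpr (Prod.ext hcolor hbit))

theorem isStarColoring_extendColoring (c : G.Coloring α) :
    IsStarColoring (attachClique G r) (extendColoring e r c) :=
  isStarColoring_of_unique_adj_color_eq fun _ _ _ hxy hxz cy cz ↦
    (eq_partner_of_adj_of_extendColoring_eq e c hxy cy).trans
      (eq_partner_of_adj_of_extendColoring_eq e c hxz cz).symm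

end ExtendColoring

theorem exists_isStarColoring_iff_nonempty_coloring [Fintype ι] [Fintype α]
    (G : SimpleGraph V) (r : ι) (hcard : Fintype.card ι = 2 * Fintype.card α) :
    (∃ c : V × ι → α, IsStarColoring (attachClique G r) c) ↔ Nonempty (G.Coloring α) := by
  classical
  constructor
  · rintro ⟨c, hc⟩
    exact ⟨.mk (fun v ↦ c (v, r)) fun huv ↦ root_color_ne hcard.ge hc huv⟩
  · rintro ⟨c⟩
    have e : ι ≃ α × Bool := Fintype.equivOfCardEq <| by
      rw [hcard, Fintype.card_prod, Fintype.card_bool, mul_comm]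
    exact ⟨_, isStarColoring_extendColoring e c⟩

end attachClique

end AttachClique

/-- The identification of `attachK6 G` with the general construction `attachClique`, for cliques
indexed by `Option (Fin 5)`: the root is `none` and the new vertices are `some i`. -/
def attachK6Iso {V : Type*} (G : SimpleGraph V) :
    attachK6 G ≃g attachClique G (none : Option (Fin 5)) where
  toFun := Sum.elim (fun v ↦ (v, none)) (Prod.map id some)
  invFun x := x.2.elim (Sum.inl x.1) fun i ↦ Sum.inr (x.1, i)
  left_inv := by rintro (v | ⟨v, i⟩) <;> rfl
  right_inv := by rintro ⟨v, _ | i⟩ <;> rfl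
  map_rel_iff' := by
    rintro (u | ⟨u, i⟩) (v | ⟨v, j⟩)
    · simpa [attachK6, attachClique.adj_iff, G.adj_comm v u] using SimpleGraph.Adj.ne
    · simp [attachK6, attachClique.adj_iff]
    · simp [attachK6, attachClique.adj_iff, eq_comm]
    · simpa [attachK6, attachClique.adj_iff, eq_comm (a := v) (b := u), and_comm (b := u = v)]
        using Or.inl

theorem attachK6_three_star_colorable_iff_three_colorable_general
    {V : Type*} (G : SimpleGraph V) :
    (∃ c : V ⊕ V × Fin 5 → Fin 3, IsStarColoring (attachK6 G) c) ↔
    (∃ c : V → Fin 3, ∀ u v : V, G.Adj u v → c u ≠ c v) := by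
  calc (∃ c : V ⊕ V × Fin 5 → Fin 3, IsStarColoring (attachK6 G) c)
    _ ↔ ∃ c : V × Option (Fin 5) → Fin 3, IsStarColoring (attachClique G none) c :=
      exists_isStarColoring_congr (attachK6Iso G)
    _ ↔ Nonempty (G.Coloring (Fin 3)) :=
      attachClique.exists_isStarColoring_iff_nonempty_coloring G none (by simp)
    _ ↔ ∃ c : V → Fin 3, ∀ u v : V, G.Adj u v → c u ≠ c v :=
      ⟨fun ⟨c⟩ ↦ ⟨c, fun _ _ ↦ c.valid⟩, fun ⟨c, hc⟩ ↦ ⟨.mk c fun {u v} ↦ hc u v⟩⟩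

/-- For any finite simple graph `G`, the graph `H` obtained from
`G` by attaching a copy of `K_6` at each vertex admits a 3-star-coloring if and
only if `G` admits a proper 3-coloring. -/
theorem attachK6_three_star_colorable_iff_three_colorable
    {V : Type*} [Fintype V] (G : SimpleGraph V) :
    (∃ c : V ⊕ V × Fin 5 → Fin 3, IsStarColoring (attachK6 G) c) ↔
    (∃ c : V → Fin 3, ∀ u v : V, G.Adj u v → c u ≠ c v) :=
  attachK6_three_star_colorable_iff_three_colorable_general G
end
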